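/- (Representability via optimal value matching.) Let b : [0,∞) → ℝ be continuous with b(0) > 0, t0 > 0 and x0 < b(t0). Suppose λ̄ is a finite nonnegative Borel measure on (0,t0] whose topological support is all of (0,t0] (equivalently, λ̄(I) > 0 for every nonempty relatively open subinterval I of (0,t0]) and which satisfies ∫ r_θ(t,b(t)) λ̄(dt) = r_θ(t0,x0) for every θ ∈ [2b(0),∞). If μ is a (D1)-admissible measure with ∫ r_θ(t0,x0) μ(dθ) = λ̄((0,t0]), then r_μ(t, b(t)) = 1 for every t ∈ (0,t0). -/

import Mathlib

open MeasureTheory Set Filter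
open scoped ENNReal NNReal Topology

noncomputable def rTheta (θ t x : ℝ) : ℝ := Real.exp (-θ ^ 2 / (2 * t) + θ * x / t)

noncomputable def rMu (μ : Measure ℝ) (t x : ℝ) : ℝ≥0∞ :=
  ∫⁻ θ, ENNReal.ofReal (rTheta θ t x) ∂μ

/-!
Admissible measures `μ` and measures `λ̄` on `(0, t0]` representing `g` are feasible points of a
dual pair of linear programs whose values are `∫ g dμ` and `λ̄((0, t0])`. Equal values force
complementary slackness: the constraint `r_μ(t, b(t)) ≤ 1` is tight for `λ̄`-almost every `t`. As
`t ↦ r_μ(t, b(t))` is continuous, it is then tight on the whole support of `λ̄`.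
-/

theorem ae_lintegral_eq_of_ae_le_of_le_lintegral {α β : Type*} [MeasurableSpace α]
    [MeasurableSpace β] {ν : Measure α} {μ : Measure β} [SFinite ν] [SFinite μ]
    {K : α → β → ℝ≥0∞} {f : α → ℝ≥0∞} (hK : AEMeasurable (Function.uncurry K) (ν.prod μ))
    (hf : AEMeasurable f ν) (hf_fin : ∫⁻ x, f x ∂ν ≠ ∞)
    (hKf : ∀ᵐ x ∂ν, ∫⁻ y, K x y ∂μ ≤ f x)
    (hfK : ∫⁻ x, f x ∂ν ≤ ∫⁻ y, ∫⁻ x, K x y ∂ν ∂μ) :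
    ∀ᵐ x ∂ν, ∫⁻ y, K x y ∂μ = f x := by
  rw [← lintegral_lintegral_swap hK] at hfK
  exact ae_eq_of_ae_le_of_lintegral_le hKf ((lintegral_mono_ae hKf).trans_lt hf_fin.lt_top).ne
    hf hfK

theorem eqOn_inter_support_of_ae_eq {X Y : Type*} [TopologicalSpace X] [MeasurableSpace X]
    [TopologicalSpace Y] [T2Space Y] {ν : Measure X} {f g : X → Y} {s : Set X}
    (hs : ∀ᵐ x ∂ν, x ∈ s) (hfg : f =ᵐ[ν] g) (hf : ContinuousOn f s) (hg : ContinuousOn g s) :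
    EqOn f g (s ∩ ν.support) := by
  rintro x ⟨hxs, hx⟩
  by_contra hne
  obtain ⟨U, hU, hUs⟩ := mem_nhdsWithin_iff_exists_mem_nhds_inter.1 <|
    ((hf x hxs).prodMk (hg x hxs)).eventually (isClosed_diagonal.isOpen_compl.mem_nhds hne)
  refine ((Measure.mem_support_iff_forall x).1 hx U hU).ne' ?_
  refine measure_eq_zero_iff_ae_notMem.2 ?_
  filter_upwards [hs, hfg] with y hys hy hyU
  exact hUs ⟨hyU, hys⟩ hy

theorem subset_support_of_forall_Ioo_inter_pos {X : Type*} [TopologicalSpace X] [LinearOrder X]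
    [OrderTopology X] [NoMinOrder X] [NoMaxOrder X] [MeasurableSpace X] {ν : Measure X} {s : Set X}
    (h : ∀ u v : X, (Ioo u v ∩ s).Nonempty → 0 < ν (Ioo u v ∩ s)) : s ⊆ ν.support :=
  fun x hx => (nhds_basis_Ioo x).mem_measureSupport.2 fun I hI =>
    (h I.1 I.2 ⟨x, hI, hx⟩).trans_le (measure_mono inter_subset_left)

theorem measurable_rTheta : Measurable fun p : ℝ × ℝ × ℝ => rTheta p.1 p.2.1 p.2.2 := by
  unfold rTheta
  fun_prop

theorem continuousAt_rTheta (θ : ℝ) {t x : ℝ} (ht : t ≠ 0) :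
    ContinuousAt (fun p : ℝ × ℝ => rTheta θ p.1 p.2) (t, x) := by
  have h2t : 2 * t ≠ 0 := mul_ne_zero two_ne_zero ht
  unfold rTheta
  fun_prop (disch := assumption)

theorem rTheta_le_exp {t : ℝ} (ht : 0 < t) (θ x : ℝ) :
    rTheta θ t x ≤ Real.exp (x ^ 2 / (2 * t)) := by
  have complete_square :
      -θ ^ 2 / (2 * t) + θ * x / t = x ^ 2 / (2 * t) - (θ - x) ^ 2 / (2 * t) := by
    field_simp
    ring
  rw [rTheta, complete_square]
  exact Real.exp_le_exp.2 (sub_le_self _ (by positivity))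

theorem continuousAt_rMu (μ : Measure ℝ) [IsFiniteMeasure μ] {t x : ℝ} (ht : 0 < t) :
    ContinuousAt (fun p : ℝ × ℝ => rMu μ p.1 p.2) (t, x) := by
  have h2t : 2 * t ≠ 0 := by positivity
  have bound_continuous :
      ContinuousAt (fun p : ℝ × ℝ => Real.exp (p.2 ^ 2 / (2 * p.1))) (t, x) := by
    fun_prop (disch := assumption)
  have bound_le : ∀ᶠ p : ℝ × ℝ in 𝓝 (t, x),
      Real.exp (p.2 ^ 2 / (2 * p.1)) ≤ Real.exp (x ^ 2 / (2 * t)) + 1 :=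
    bound_continuous.eventually_le_const (lt_add_one _)
  have pos : ∀ᶠ p : ℝ × ℝ in 𝓝 (t, x), 0 < p.1 :=
    continuousAt_fst.eventually_const_lt ht
  refine tendsto_lintegral_filter_of_dominated_convergence
    (fun _ => ENNReal.ofReal (Real.exp (x ^ 2 / (2 * t)) + 1)) ?measurable ?bounded ?finite ?limit
  case measurable =>
    exact .of_forall fun p =>
      (measurable_rTheta.comp (measurable_id.prodMk measurable_const)).ennreal_ofReal
  case bounded =>
    filter_upwards [bound_le, pos] with p hp hp0
    exact .of_forall fun θ => ENNReal.ofReal_le_ofReal ((rTheta_le_exp hp0 θ p.2).trans hp)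
  case finite =>
    rw [lintegral_const]
    exact ENNReal.mul_ne_top ENNReal.ofReal_ne_top (measure_ne_top _ _)
  case limit =>
    exact .of_forall fun θ => ENNReal.tendsto_ofReal (continuousAt_rTheta θ ht.ne')

theorem continuousOn_rMu_curve (μ : Measure ℝ) [IsFiniteMeasure μ] {b : ℝ → ℝ} {s : Set ℝ}
    (hs : s ⊆ Ioi 0) (hb : ContinuousOn b s) : ContinuousOn (fun t => rMu μ t (b t)) s :=
  fun t ht => (continuousAt_rMu μ (hs ht)).comp_continuousWithinAt (f := fun t => (t, b t))
    (continuousWithinAt_id.prodMk (hb t ht))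

theorem aemeasurable_ofReal_rTheta {ν μ : Measure ℝ} {b : ℝ → ℝ} (hb : AEMeasurable b ν) :
    AEMeasurable (Function.uncurry fun t θ => ENNReal.ofReal (rTheta θ t (b t))) (ν.prod μ) :=
  (measurable_rTheta.comp_aemeasurable
    (measurable_snd.aemeasurable.prodMk (measurable_fst.aemeasurable.prodMk hb.comp_fst)))
    |>.ennreal_ofReal

theorem stmt_12_general {b : ℝ → ℝ} {s : Set ℝ} (hs : s ⊆ Ioi 0) (hb : ContinuousOn b s)
    {g : ℝ → ℝ≥0∞} {ν μ : Measure ℝ} [IsFiniteMeasure ν] [IsFiniteMeasure μ]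
    (hν : ∀ᵐ t ∂ν, t ∈ s)
    (hg : ∀ᵐ θ ∂μ, ∫⁻ t, ENNReal.ofReal (rTheta θ t (b t)) ∂ν = g θ)
    (hμ : ∀ᵐ t ∂ν, rMu μ t (b t) ≤ 1) (hval : ∫⁻ θ, g θ ∂μ = ν univ) :
    ∀ t ∈ s ∩ ν.support, rMu μ t (b t) = 1 := by
  have hb_meas : AEMeasurable b ν := by
    rw [← Measure.restrict_eq_self_of_ae_mem hν]
    exact hb.aemeasurable₀ (nullMeasurableSet_univ.congr (eventuallyEq_univ.2 hν).symm)
  have tight : ∀ᵐ t ∂ν, rMu μ t (b t) = 1 := by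
    refine ae_lintegral_eq_of_ae_le_of_le_lintegral (aemeasurable_ofReal_rTheta hb_meas)
      aemeasurable_const ?_ hμ ?_
    · rw [lintegral_one]
      exact measure_ne_top ν univ
    · rw [lintegral_one, lintegral_congr_ae hg, hval]
  exact eqOn_inter_support_of_ae_eq hν tight (continuousOn_rMu_curve μ hs hb) continuousOn_const

theorem stmt_12 (b : ℝ → ℝ) (hbcont : ContinuousOn b (Set.Ici 0)) (hb0 : 0 < b 0)
    (t0 x0 : ℝ) (ht0 : 0 < t0) (hx0 : x0 < b t0)
    (lamBar : Measure ℝ) [IsFiniteMeasure lamBar]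
    (hlamBarSupp : lamBar (Set.Ioc 0 t0)ᶜ = 0)
    -- the topological support of `lamBar` is all of `(0, t0]`: every nonempty
    -- relatively open subinterval has positive mass
    (hfull : ∀ u v : ℝ, (Set.Ioo u v ∩ Set.Ioc 0 t0).Nonempty →
      0 < lamBar (Set.Ioo u v ∩ Set.Ioc 0 t0))
    (hlamBarEq : ∀ θ ∈ Set.Ici (2 * b 0),
      (∫⁻ t, ENNReal.ofReal (rTheta θ t (b t)) ∂lamBar) = ENNReal.ofReal (rTheta θ t0 x0))
    (μ : Measure ℝ) [IsFiniteMeasure μ] (hμsupp : μ (Set.Ici (2 * b 0))ᶜ = 0)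
    (hμadm : ∀ t ∈ Set.Ioc 0 t0, rMu μ t (b t) ≤ 1)
    (hval : (∫⁻ θ, ENNReal.ofReal (rTheta θ t0 x0) ∂μ) = lamBar (Set.Ioc 0 t0)) :
    ∀ t ∈ Set.Ioo 0 t0, rMu μ t (b t) = 1 := by
  have hlam : ∀ᵐ t ∂lamBar, t ∈ Ioc 0 t0 := mem_ae_iff.2 hlamBarSupp
  have hμ : ∀ᵐ θ ∂μ, θ ∈ Ici (2 * b 0) := mem_ae_iff.2 hμsupp
  have tight := stmt_12_general Ioc_subset_Ioi_self (hbcont.mono fun _ ht => ht.1.le) hlam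
    (hμ.mono hlamBarEq) (hlam.mono hμadm) (hval.trans (measure_congr (eventuallyEq_univ.2 hlam)))
  rw [inter_eq_left.2 (subset_support_of_forall_Ioo_inter_pos hfull)] at tight
  exact fun t ht => tight t (Ioo_subset_Ioc_self ht)
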